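/- arXiv:2103.00253 — 2 statements merged into one kernel-verified Lean document; each statement's English description precedes it below -/
import Mathlib

section
/- Let R be a commutative Noetherian local ring and let M be a finitely generated R-module such that for every totally reflexive R-module X one has Ext^j_R(X, M) = 0 for all j ≥ 1. Suppose there are finitely generated R-modules K_0 = M, K_1, …, K_r (r ≥ 1), positive integers a_1, …, a_r, b_1, …, b_r, n_1, …, n_r, and short exact sequences 0 → K_{i-1}^{⊕a_i} → K_i → Ω^{n_i} K_{i-1}^{⊕b_i} → 0 for each i = 1, …, r. Then for every totally reflexive R-module X one has Ext^j_R(X, K_i) = 0 for all j ≥ 1 and all i = 0, …, r. -/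
open CategoryTheory Pointwise

universe u

variable (R : Type u) [CommRing R]

/-- `Ext^n_R(X, Y) = 0`. -/
def ExtVanish (X Y : Type u) [AddCommGroup X] [Module R X]
    [AddCommGroup Y] [Module R Y] (n : ℕ) : Prop :=
  Subsingleton (((Ext R (ModuleCat.{u} R) n).obj
    (Opposite.op (ModuleCat.of R X))).obj (ModuleCat.of R Y))

/-- A finitely generated module `X` is totally reflexive if the evaluation map to the
double dual is bijective and `Ext^i(X, R) = 0 = Ext^i(X^*, R)` for all `i ≥ 1`. -/
def IsTotallyReflexive (X : Type u) [AddCommGroup X] [Module R X] : Prop :=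
  Module.Finite R X ∧
  Function.Bijective (Module.Dual.eval R X) ∧
  (∀ i : ℕ, 1 ≤ i → ExtVanish R X R i) ∧
  (∀ i : ℕ, 1 ≤ i → ExtVanish R (Module.Dual R X) R i)

/-- `0 → A → B → C → 0` is a short exact sequence. -/
def IsShortExact {A B C : Type u} [AddCommGroup A] [Module R A] [AddCommGroup B] [Module R B]
    [AddCommGroup C] [Module R C] (f : A →ₗ[R] B) (g : B →ₗ[R] C) : Prop :=
  Function.Injective f ∧ Function.Surjective g ∧ Function.Exact f g

/-- Gorenstein dimension at most `n`: there is a resolution of length `≤ n`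
by totally reflexive modules. -/
def GdimLE : ℕ → ModuleCat.{u} R → Prop
  | 0, M => IsTotallyReflexive R M
  | n + 1, M => ∃ (X K : ModuleCat.{u} R) (f : K →ₗ[R] X) (g : X →ₗ[R] M),
      IsTotallyReflexive R X ∧ IsShortExact R f g ∧ GdimLE n K

/-- Projective dimension at most `n`. -/
def PdimLE : ℕ → ModuleCat.{u} R → Prop
  | 0, M => Module.Finite R M ∧ Module.Projective R M
  | n + 1, M => ∃ (X K : ModuleCat.{u} R) (f : K →ₗ[R] X) (g : X →ₗ[R] M),
      Module.Finite R X ∧ Module.Projective R X ∧ IsShortExact R f g ∧ PdimLE n K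

/-- Injective dimension at most `n`. -/
def InjdimLE : ℕ → ModuleCat.{u} R → Prop
  | 0, M => Module.Injective R M
  | n + 1, M => ∃ (I C : ModuleCat.{u} R) (f : M →ₗ[R] I) (g : I →ₗ[R] C),
      Module.Injective R I ∧ IsShortExact R f g ∧ InjdimLE n C

/-- The Gorenstein dimension, as an element of `ℕ∞`. -/
noncomputable def Gdim (M : ModuleCat.{u} R) : ℕ∞ :=
  sInf {n : ℕ∞ | ∃ m : ℕ, n = (m : ℕ∞) ∧ GdimLE R m M}

/-- The projective dimension, as an element of `ℕ∞`. -/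
noncomputable def Pdim (M : ModuleCat.{u} R) : ℕ∞ :=
  sInf {n : ℕ∞ | ∃ m : ℕ, n = (m : ℕ∞) ∧ PdimLE R m M}

/-- A local ring is Gorenstein if it has finite injective dimension over itself. -/
def IsGorensteinRing : Prop :=
  ∃ n : ℕ, InjdimLE R n (ModuleCat.of R R)

/-- `IsSyzygy R n S K` : `S` is an `n`-th syzygy of `K`, i.e. there is an exact sequence
`0 → S → F_{n-1} → ⋯ → F_0 → K → 0` with each `F_j` finitely generated free. -/
def IsSyzygy : ℕ → ModuleCat.{u} R → ModuleCat.{u} R → Prop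
  | 0, S, K => Nonempty (S ≃ₗ[R] K)
  | n + 1, S, K => ∃ (W F : ModuleCat.{u} R) (f : W →ₗ[R] F) (g : F →ₗ[R] K),
      Module.Free R F ∧ Module.Finite R F ∧ IsShortExact R f g ∧ IsSyzygy n S W

/-- One step in a reducing sequence: a short exact sequence
`0 → K^{⊕a} → L → (Ω^n K)^{⊕b} → 0`. -/
def ReducingStep (K L : ModuleCat.{u} R) (a b n : ℕ) : Prop :=
  ∃ (W : ModuleCat.{u} R) (f : (Fin a → K) →ₗ[R] L) (g : L →ₗ[R] (Fin b → W)),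
    IsSyzygy R n W K ∧ IsShortExact R f g

/-- `M` admits a reducing sequence `K_0 = M, K_1, …, K_r` relative to the property `P`,
that is, short exact sequences `0 → K_{i-1}^{⊕a_i} → K_i → (Ω^{n_i}K_{i-1})^{⊕b_i} → 0`
with `a_i, b_i, n_i ≥ 1` and `P (K_r)`. -/
def HasReducingSeq (P : ModuleCat.{u} R → Prop) (M : ModuleCat.{u} R) (r : ℕ) : Prop :=
  ∃ (K : Fin (r + 1) → ModuleCat.{u} R) (a b n : Fin r → ℕ),
    K 0 = M ∧ (∀ i, Module.Finite R (K i)) ∧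
    (∀ i : Fin r, 1 ≤ a i ∧ 1 ≤ b i ∧ 1 ≤ n i ∧
      ReducingStep R (K i.castSucc) (K i.succ) (a i) (b i) (n i)) ∧
    P (K (Fin.last r))

/-- The reducing invariant attached to the finiteness property `P`. -/
noncomputable def ReducingDim (P : ModuleCat.{u} R → Prop) (M : ModuleCat.{u} R) : ℕ∞ :=
  sInf {n : ℕ∞ | ∃ r : ℕ, n = (r : ℕ∞) ∧ HasReducingSeq R P M r}

/-- The reducing Gorenstein dimension. -/
noncomputable def rGdim (M : ModuleCat.{u} R) : ℕ∞ :=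
  ReducingDim R (fun N => ∃ m : ℕ, GdimLE R m N) M

/-- The reducing projective dimension. -/
noncomputable def rPdim (M : ModuleCat.{u} R) : ℕ∞ :=
  ReducingDim R (fun N => ∃ m : ℕ, PdimLE R m N) M

/-- depth of a module over a local ring: `inf { i | Ext^i(k, M) ≠ 0 }`. -/
noncomputable def depth [IsLocalRing R] (M : ModuleCat.{u} R) : ℕ∞ :=
  sInf {n : ℕ∞ | ∃ i : ℕ, n = (i : ℕ∞) ∧
    ¬ ExtVanish R (R ⧸ IsLocalRing.maximalIdeal R) M i}

/-- maximal Cohen-Macaulay: depth equals the Krull dimension of the ring. -/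
def IsMCM [IsLocalRing R] (M : ModuleCat.{u} R) : Prop :=
  (depth R M : WithBot ℕ∞) = ringKrullDim R

/-- torsion-free: every non zero-divisor of `R` is a non zero-divisor on `M`. -/
def IsTorsionFreeModule (M : Type u) [AddCommGroup M] [Module R M] : Prop :=
  ∀ r ∈ nonZeroDivisors R, ∀ m : M, r • m = 0 → m = 0

/-!
In a short exact sequence, vanishing of `Ext^j(X, -)` at both ends gives vanishing in the middle,
so it suffices that the modules `M` with `Ext^j(X, M) = 0` for all totally reflexive `X` and all
`j ≥ 1` are closed under syzygies. The sequence `0 → ΩM → F → M → 0` yields `Ext^j(X, ΩM) = 0` only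
for `j ≥ 2`. The missing degree comes from shifting `X` instead: over a Noetherian ring it embeds
in a finitely generated free module with totally reflexive cokernel `Y`, and
`Ext^1(X, ΩM) ≅ Ext^2(Y, ΩM) = 0`.
-/

section AbelianCategory

universe v w

variable {C : Type*} [Category.{v} C] [Abelian C] [HasExt.{w} C] {S : ShortComplex C} {X Y : C}
  {n : ℕ}

theorem subsingleton_ext_to_X₂ (hS : S.ShortExact) (h₁ : Subsingleton (Abelian.Ext X S.X₁ n))
    (h₃ : Subsingleton (Abelian.Ext X S.X₃ n)) : Subsingleton (Abelian.Ext X S.X₂ n) := by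
  refine subsingleton_of_forall_eq 0 fun α ↦ ?_
  obtain ⟨β, rfl⟩ := Abelian.Ext.covariant_sequence_exact₂ X hS α (Subsingleton.elim _ _)
  rw [Subsingleton.elim β 0, Abelian.Ext.zero_comp]

theorem subsingleton_ext_to_X₁ (hS : S.ShortExact) (h₃ : Subsingleton (Abelian.Ext X S.X₃ n))
    (h₂ : Subsingleton (Abelian.Ext X S.X₂ (n + 1))) :
    Subsingleton (Abelian.Ext X S.X₁ (n + 1)) := by
  refine subsingleton_of_forall_eq 0 fun α ↦ ?_
  obtain ⟨β, rfl⟩ := Abelian.Ext.covariant_sequence_exact₁ X hS α (Subsingleton.elim _ _) rfl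
  rw [Subsingleton.elim β 0, Abelian.Ext.zero_comp]

theorem subsingleton_ext_from_X₁ (hS : S.ShortExact) (h₂ : Subsingleton (Abelian.Ext S.X₂ Y n))
    (h₃ : Subsingleton (Abelian.Ext S.X₃ Y (n + 1))) : Subsingleton (Abelian.Ext S.X₁ Y n) := by
  refine subsingleton_of_forall_eq 0 fun α ↦ ?_
  obtain ⟨β, rfl⟩ := Abelian.Ext.contravariant_sequence_exact₁ hS Y α (add_comm 1 n)
    (Subsingleton.elim _ _)
  rw [Subsingleton.elim β 0, Abelian.Ext.comp_zero]

theorem subsingleton_ext_from_X₃ (hS : S.ShortExact) (h₁ : Subsingleton (Abelian.Ext S.X₁ Y n))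
    (h₂ : Subsingleton (Abelian.Ext S.X₂ Y (n + 1))) :
    Subsingleton (Abelian.Ext S.X₃ Y (n + 1)) := by
  refine subsingleton_of_forall_eq 0 fun α ↦ ?_
  obtain ⟨β, rfl⟩ := Abelian.Ext.contravariant_sequence_exact₃ hS Y α (Subsingleton.elim _ _)
    (add_comm 1 n)
  rw [Subsingleton.elim β 0, Abelian.Ext.comp_zero]

theorem exists_extension_of_subsingleton_ext_one (hS : S.ShortExact)
    (h₃ : Subsingleton (Abelian.Ext S.X₃ Y 1)) (φ : S.X₁ ⟶ Y) : ∃ ψ : S.X₂ ⟶ Y, S.f ≫ ψ = φ := by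
  obtain ⟨β, hβ⟩ := Abelian.Ext.contravariant_sequence_exact₁ hS Y (Abelian.Ext.mk₀ φ)
    (add_zero 1) (Subsingleton.elim _ _)
  obtain ⟨ψ, rfl⟩ := (Abelian.Ext.mk₀_bijective _ _).2 β
  rw [Abelian.Ext.mk₀_comp_mk₀] at hβ
  exact ⟨ψ, (Abelian.Ext.mk₀_bijective _ _).1 hβ⟩

theorem subsingleton_ext_one_from_X₃ (hS : S.ShortExact)
    (hext : ∀ φ : S.X₁ ⟶ Y, ∃ ψ : S.X₂ ⟶ Y, S.f ≫ ψ = φ)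
    (h₂ : Subsingleton (Abelian.Ext S.X₂ Y 1)) : Subsingleton (Abelian.Ext S.X₃ Y 1) := by
  refine subsingleton_of_forall_eq 0 fun α ↦ ?_
  obtain ⟨β, rfl⟩ := Abelian.Ext.contravariant_sequence_exact₃ hS Y α (Subsingleton.elim _ _)
    (add_zero 1)
  obtain ⟨φ, rfl⟩ := (Abelian.Ext.mk₀_bijective _ _).2 β
  obtain ⟨ψ, rfl⟩ := hext φ
  rw [← Abelian.Ext.mk₀_comp_mk₀, ← Abelian.Ext.comp_assoc_of_second_deg_zero, hS.extClass_comp,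
    Abelian.Ext.zero_comp]

theorem subsingleton_ext_of_sum_comp_eq_id {ι : Type*} [Fintype ι] {A : ι → C}
    (hA : ∀ i, Subsingleton (Abelian.Ext X (A i) n)) (p : ∀ i, Y ⟶ A i) (s : ∀ i, A i ⟶ Y)
    (hps : ∑ i, p i ≫ s i = 𝟙 Y) : Subsingleton (Abelian.Ext X Y n) := by
  refine subsingleton_of_forall_eq 0 fun α ↦ ?_
  rw [← α.comp_mk₀_id, ← hps, Abelian.Ext.mk₀_sum, Abelian.Ext.comp_sum]
  refine Finset.sum_eq_zero fun i _ ↦ ?_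
  have hα : α.comp (Abelian.Ext.mk₀ (p i)) (add_zero n) = 0 := Subsingleton.elim _ _
  rw [← Abelian.Ext.mk₀_comp_mk₀, ← Abelian.Ext.comp_assoc_of_second_deg_zero, hα,
    Abelian.Ext.zero_comp]

end AbelianCategory

section Modules

variable {R} {X Y A B C : Type u} [AddCommGroup X] [Module R X] [AddCommGroup Y] [Module R Y]
  [AddCommGroup A] [Module R A] [AddCommGroup B] [Module R B] [AddCommGroup C] [Module R C]
  {f : A →ₗ[R] B} {g : B →ₗ[R] C}

-- `ExtVanish` refers to the left derived functors of `Hom`, whereas Mathlib's long exact sequences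
-- are stated for `Abelian.Ext`; a projective resolution of `X` computes both.
theorem extVanish_succ_iff {n : ℕ} : ExtVanish R X Y (n + 1) ↔
    Subsingleton (Abelian.Ext.{u} (ModuleCat.of R X) (ModuleCat.of R Y) (n + 1)) := by
  let P := projectiveResolution (ModuleCat.of R X)
  rw [ExtVanish, ← ModuleCat.isZero_iff_subsingleton, (P.isoExt (n + 1) _).isZero_iff,
    ← HomologicalComplex.exactAt_iff_isZero_homology,
    HomologicalComplex.exactAt_iff' _ n (n + 1) (n + 2) (by simp) (by simp),
    ShortComplex.moduleCat_exact_iff]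
  constructor
  · intro hexact
    refine subsingleton_of_forall_eq 0 fun α ↦ ?_
    obtain ⟨φ, hφ, rfl⟩ := P.extMk_surjective α (n + 2) rfl
    rw [P.extMk_eq_zero_iff _ _ _ _ n rfl]
    exact hexact φ hφ
  · intro _ φ hφ
    exact (P.extMk_eq_zero_iff φ (n + 2) rfl hφ n rfl).1 (Subsingleton.elim _ _)

theorem forall_extVanish_iff : (∀ j : ℕ, 1 ≤ j → ExtVanish R X Y j) ↔
    ∀ n : ℕ, Subsingleton (Abelian.Ext.{u} (ModuleCat.of R X) (ModuleCat.of R Y) (n + 1)) := by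
  refine ⟨fun h n ↦ extVanish_succ_iff.1 (h (n + 1) n.succ_pos), fun h j hj ↦ ?_⟩
  obtain ⟨n, rfl⟩ := Nat.exists_eq_add_of_le' hj
  exact extVanish_succ_iff.2 (h n)

theorem subsingleton_ext_of_projective [Module.Projective R X] (n : ℕ) :
    Subsingleton (Abelian.Ext.{u} (ModuleCat.of R X) (ModuleCat.of R Y) (n + 1)) :=
  have : Projective (ModuleCat.of R X) := (IsProjective.iff_projective X).1 ‹_›
  Abelian.Ext.subsingleton_of_projective _ _ n

namespace IsShortExact

theorem shortExact (h : IsShortExact R f g) :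
    (ModuleCat.shortComplexOfCompEqZero f g h.2.2.linearMap_comp_eq_zero).ShortExact :=
  ModuleCat.shortComplex_shortExact _ h.2.2 h.1 h.2.1

theorem dualMap (h : IsShortExact R f g) (hf : Function.Surjective f.dualMap) :
    IsShortExact R g.dualMap f.dualMap :=
  ⟨LinearMap.dualMap_injective_of_surjective h.2.1, hf,
    LinearMap.exact_lcomp_of_exact_of_surjective R h.2.2 h.2.1⟩

theorem dualMap_surjective (h : IsShortExact R f g)
    (hC : Subsingleton (Abelian.Ext.{u} (ModuleCat.of R C) (ModuleCat.of R R) 1)) :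
    Function.Surjective f.dualMap := by
  intro φ
  obtain ⟨ψ, hψ⟩ := exists_extension_of_subsingleton_ext_one h.shortExact hC (ModuleCat.ofHom φ)
  exact ⟨ψ.hom, congrArg ModuleCat.Hom.hom hψ⟩

theorem isReflexive_right (h : IsShortExact R f g) (hf : Function.Surjective f.dualMap)
    [Module.IsReflexive R A] [Module.IsReflexive R B]
    (hA : Subsingleton
      (Abelian.Ext.{u} (ModuleCat.of R (Module.Dual R A)) (ModuleCat.of R R) 1)) :
    Module.IsReflexive R C := by
  have hdual : IsShortExact R g.dualMap f.dualMap := h.dualMap hf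
  have hbidual : IsShortExact R f.dualMap.dualMap g.dualMap.dualMap :=
    hdual.dualMap (hdual.dualMap_surjective hA)
  exact ⟨LinearMap.bijective_of_surjective_of_bijective_of_right_exact
    f g f.dualMap.dualMap g.dualMap.dualMap
    (Module.Dual.eval R A) (Module.Dual.eval R B) (Module.Dual.eval R C)
    (Module.Dual.eval_naturality f) (Module.Dual.eval_naturality g) h.2.2 hbidual.2.2
    (Module.bijective_dual_eval R A).2 (Module.bijective_dual_eval R B) h.2.1 hbidual.2.1⟩

end IsShortExact

theorem isTotallyReflexive_iff : IsTotallyReflexive R X ↔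
    Module.Finite R X ∧ Module.IsReflexive R X ∧
    (∀ n : ℕ, Subsingleton (Abelian.Ext.{u} (ModuleCat.of R X) (ModuleCat.of R R) (n + 1))) ∧
    ∀ n : ℕ, Subsingleton
      (Abelian.Ext.{u} (ModuleCat.of R (Module.Dual R X)) (ModuleCat.of R R) (n + 1)) := by
  have hrefl : Function.Bijective (Module.Dual.eval R X) ↔ Module.IsReflexive R X :=
    ⟨fun h ↦ ⟨h⟩, fun _ ↦ Module.bijective_dual_eval R X⟩
  simp only [IsTotallyReflexive, forall_extVanish_iff, hrefl]

theorem exists_injective_dualMap_surjective [Module.Finite R (Module.Dual R X)]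
    (hX : Function.Injective (Module.Dual.eval R X)) :
    ∃ (m : ℕ) (f : X →ₗ[R] (Fin m → R)),
      Function.Injective f ∧ Function.Surjective f.dualMap := by
  obtain ⟨m, φ, hφ⟩ := Submodule.fg_iff_exists_fin_generating_family.1
    (Module.Finite.fg_top (R := R) (M := Module.Dual R X))
  have hsurj : Function.Surjective (LinearMap.pi φ).dualMap := by
    intro ξ
    obtain ⟨c, rfl⟩ := (Submodule.mem_span_range_iff_exists_fun R).1
      (hφ ▸ Submodule.mem_top : ξ ∈ Submodule.span R (Set.range φ))
    exact ⟨∑ i, c i • LinearMap.proj i, by ext; simp⟩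
  refine ⟨m, LinearMap.pi φ, fun x y hxy ↦ hX ?_, hsurj⟩
  ext ξ
  obtain ⟨ψ, rfl⟩ := hsurj ξ
  exact congrArg ψ hxy

namespace IsTotallyReflexive

theorem finite_dual [IsNoetherianRing R] (hX : IsTotallyReflexive R X) :
    Module.Finite R (Module.Dual R X) :=
  have : Module.Finite R X := hX.1
  inferInstance

theorem of_isShortExact (hA : IsTotallyReflexive R A) [Module.Finite R B] [Module.Projective R B]
    (h : IsShortExact R f g) (hf : Function.Surjective f.dualMap) : IsTotallyReflexive R C := by
  obtain ⟨-, _, hExt, hExtDual⟩ := isTotallyReflexive_iff.1 hA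
  refine isTotallyReflexive_iff.2 ⟨Module.Finite.of_surjective g h.2.1,
    h.isReflexive_right hf (hExtDual 0), fun n ↦ ?_, fun n ↦ ?_⟩
  · cases n with
    | zero =>
      refine subsingleton_ext_one_from_X₃ h.shortExact (fun φ ↦ ?_)
        (subsingleton_ext_of_projective 0)
      obtain ⟨ψ, hψ⟩ := hf φ.hom
      exact ⟨ModuleCat.ofHom ψ, ModuleCat.hom_ext hψ⟩
    | succ n =>
      exact subsingleton_ext_from_X₃ h.shortExact (hExt n) (subsingleton_ext_of_projective (n + 1))
  · exact subsingleton_ext_from_X₁ (h.dualMap hf).shortExact (subsingleton_ext_of_projective n)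
      (hExtDual (n + 1))

theorem exists_cosyzygy [Module.Finite R (Module.Dual R X)] (hX : IsTotallyReflexive R X) :
    ∃ (m : ℕ) (Y : ModuleCat.{u} R) (f : X →ₗ[R] (Fin m → R)) (g : (Fin m → R) →ₗ[R] Y),
      IsShortExact R f g ∧ IsTotallyReflexive R Y := by
  obtain ⟨m, f, hinj, hsurj⟩ := exists_injective_dualMap_surjective hX.2.1.1
  have h : IsShortExact R f (LinearMap.range f).mkQ :=
    ⟨hinj, Submodule.mkQ_surjective _, LinearMap.exact_map_mkQ_range f⟩
  exact ⟨m, ModuleCat.of R _, f, _, h, hX.of_isShortExact h hsurj⟩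

end IsTotallyReflexive

variable (R) in
/-- `M` lies in the right `Ext`-orthogonal class of the totally reflexive modules. The
modules of a reducing sequence stay in this class because it is closed under extensions, finite
direct sums and syzygies. -/
def IsTotallyReflexivePerp (M : Type u) [AddCommGroup M] [Module R M] : Prop :=
  ∀ X : ModuleCat.{u} R, IsTotallyReflexive R X → ∀ j : ℕ, 1 ≤ j → ExtVanish R X M j

theorem isTotallyReflexivePerp_iff : IsTotallyReflexivePerp R A ↔
    ∀ X : ModuleCat.{u} R, IsTotallyReflexive R X →
      ∀ n : ℕ, Subsingleton (Abelian.Ext.{u} X (ModuleCat.of R A) (n + 1)) :=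
  forall₂_congr fun _ _ ↦ forall_extVanish_iff

theorem isTotallyReflexivePerp_self : IsTotallyReflexivePerp R R :=
  fun _ hX ↦ hX.2.2.1

namespace IsTotallyReflexivePerp

theorem of_sum_comp_eq_id {ι : Type*} [Fintype ι] {M : ι → Type u} [∀ i, AddCommGroup (M i)]
    [∀ i, Module R (M i)] (hM : ∀ i, IsTotallyReflexivePerp R (M i)) (p : ∀ i, A →ₗ[R] M i)
    (s : ∀ i, M i →ₗ[R] A) (hps : ∑ i, s i ∘ₗ p i = LinearMap.id) :
    IsTotallyReflexivePerp R A := by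
  refine isTotallyReflexivePerp_iff.2 fun X hX n ↦ subsingleton_ext_of_sum_comp_eq_id
    (fun i ↦ isTotallyReflexivePerp_iff.1 (hM i) X hX n) (fun i ↦ ModuleCat.ofHom (p i))
    (fun i ↦ ModuleCat.ofHom (s i)) (ModuleCat.hom_ext ?_)
  simpa only [ModuleCat.hom_sum, ModuleCat.hom_comp, ModuleCat.hom_ofHom, ModuleCat.hom_id]
    using hps

theorem of_comp_eq_id (hA : IsTotallyReflexivePerp R A) (p : B →ₗ[R] A) (s : A →ₗ[R] B)
    (hps : s ∘ₗ p = LinearMap.id) : IsTotallyReflexivePerp R B :=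
  of_sum_comp_eq_id (ι := Unit) (fun _ ↦ hA) (fun _ ↦ p) (fun _ ↦ s) (by simpa using hps)

theorem pi {ι : Type} [Finite ι] {M : ι → Type u} [∀ i, AddCommGroup (M i)]
    [∀ i, Module R (M i)] (hM : ∀ i, IsTotallyReflexivePerp R (M i)) :
    IsTotallyReflexivePerp R (∀ i, M i) := by
  classical
  cases nonempty_fintype ι
  refine of_sum_comp_eq_id hM LinearMap.proj (LinearMap.single R M) (LinearMap.ext fun x ↦ ?_)
  simpa [LinearMap.sum_apply] using Finset.univ_sum_single x

theorem of_finite_projective [Module.Finite R A] [Module.Projective R A] :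
    IsTotallyReflexivePerp R A := by
  obtain ⟨m, s, p, -, -, hps⟩ := Module.Finite.exists_comp_eq_id_of_projective R A
  exact (pi fun _ : Fin m ↦ isTotallyReflexivePerp_self).of_comp_eq_id p s hps

theorem middle (h : IsShortExact R f g) (hA : IsTotallyReflexivePerp R A)
    (hC : IsTotallyReflexivePerp R C) : IsTotallyReflexivePerp R B := by
  rw [isTotallyReflexivePerp_iff] at hA hC ⊢
  exact fun X hX n ↦ subsingleton_ext_to_X₂ h.shortExact (hA X hX n) (hC X hX n)

variable [IsNoetherianRing R]

theorem left (h : IsShortExact R f g) (hB : IsTotallyReflexivePerp R B)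
    (hC : IsTotallyReflexivePerp R C) : IsTotallyReflexivePerp R A := by
  rw [isTotallyReflexivePerp_iff] at hB hC ⊢
  intro X hX n
  have := hX.finite_dual
  obtain ⟨m, Y, i, q, hiq, hY⟩ := hX.exists_cosyzygy
  have hExtY : Subsingleton (Abelian.Ext.{u} Y (ModuleCat.of R A) (n + 2)) :=
    subsingleton_ext_to_X₁ h.shortExact (hC Y hY n) (hB Y hY (n + 1))
  exact subsingleton_ext_from_X₁ hiq.shortExact (subsingleton_ext_of_projective n) hExtY

theorem syzygy {n : ℕ} {S K : ModuleCat.{u} R} (hS : IsSyzygy R n S K)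
    (hK : IsTotallyReflexivePerp R K) : IsTotallyReflexivePerp R S := by
  induction n generalizing K with
  | zero =>
    obtain ⟨e⟩ := hS
    exact hK.of_comp_eq_id e.toLinearMap e.symm.toLinearMap e.symm_comp
  | succ n ih =>
    obtain ⟨W, F, f, g, _, _, hfg, hW⟩ := hS
    exact ih hW (left hfg of_finite_projective hK)

theorem of_reducingStep {K L : ModuleCat.{u} R} {a b n : ℕ} (h : ReducingStep R K L a b n)
    (hK : IsTotallyReflexivePerp R K) : IsTotallyReflexivePerp R L := by
  obtain ⟨W, f, g, hW, hfg⟩ := h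
  exact middle hfg (pi fun _ ↦ hK) (pi fun _ ↦ hK.syzygy hW)

end IsTotallyReflexivePerp

end Modules

theorem stmt10_general (R : Type u) [CommRing R] [IsNoetherianRing R]
    (r : ℕ) (K : Fin (r + 1) → ModuleCat.{u} R) (a b n : Fin r → ℕ)
    (hseq : ∀ i : Fin r, ReducingStep R (K i.castSucc) (K i.succ) (a i) (b i) (n i))
    (hext : ∀ X : ModuleCat.{u} R, IsTotallyReflexive R X →
      ∀ j : ℕ, 1 ≤ j → ExtVanish R X (K 0) j) :
    ∀ X : ModuleCat.{u} R, IsTotallyReflexive R X →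
      ∀ j : ℕ, 1 ≤ j → ∀ i : Fin (r + 1), ExtVanish R X (K i) j := by
  have hperp : ∀ i, IsTotallyReflexivePerp R (K i) :=
    Fin.induction hext fun i hi ↦ .of_reducingStep (hseq i) hi
  exact fun X hX j hj i ↦ hperp i X hX j hj

theorem stmt10 (R : Type u) [CommRing R] [IsNoetherianRing R] [IsLocalRing R]
    (r : ℕ) (hr : 1 ≤ r) (K : Fin (r + 1) → ModuleCat.{u} R)
    (hfin : ∀ i, Module.Finite R (K i))
    (a b n : Fin r → ℕ) (habn : ∀ i, 1 ≤ a i ∧ 1 ≤ b i ∧ 1 ≤ n i)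
    (hseq : ∀ i : Fin r, ReducingStep R (K i.castSucc) (K i.succ) (a i) (b i) (n i))
    (hext : ∀ X : ModuleCat.{u} R, IsTotallyReflexive R X →
      ∀ j : ℕ, 1 ≤ j → ExtVanish R X (K 0) j) :
    ∀ X : ModuleCat.{u} R, IsTotallyReflexive R X →
      ∀ j : ℕ, 1 ≤ j → ∀ i : Fin (r + 1), ExtVanish R X (K i) j :=
  stmt10_general R r K a b n hseq hext
end

section
/- Let R be a one-dimensional commutative Noetherian local ring, and let M be a nonzero finitely generated R-module with depth_R(M) = 0 and finite injective dimension. Let K_0 = M, K_1, …, K_r be finitely generated R-modules together with positive integers a_i, b_i, n_i and short exact sequences 0 → K_{i-1}^{⊕a_i} → K_i → Ω^{n_i} K_{i-1}^{⊕b_i} → 0 for i = 1, …, r. Then for each i = 0, …, r there is an isomorphism K_i ≅ M^{⊕c_i} ⊕ L_i for some finitely generated R-module L_i and some integer c_i ≥ 1, where L_i is either zero or maximal Cohen–Macaulay; in particular, M is a direct summand of K_r. -/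
open CategoryTheory Pointwise

universe u

variable (R : Type u) [CommRing R]

/-!
By Bass, `M` has injective dimension at most `depth R ≤ 1`: if `x` is a maximal `R`-regular
sequence, then `k` embeds in `R ⧸ (x)`, whose projective dimension is `depth R`. So if `i` were the
injective dimension of `M` and `i > depth R`, then `Ext^i(k, M)` would be a quotient of
`Ext^i(R ⧸ (x), M) = 0`, which would lower the injective dimension. If `depth R = 0`, then `M` is
injective, which forces `dim R = 0`; hence `R` is Cohen–Macaulay, and every nonzero finitely
generated torsion-free module is maximal Cohen–Macaulay.

A positive syzygy `W` embeds in a free module, so it is torsion-free and `Ext^1(W, M) = 0`.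
Therefore, if `K_{i-1} = M^c ⊕ L` with `L` torsion-free, the projection of `K_{i-1}^a` onto
`M^{ac}` extends to `K_i`. The summand `M^{ac}` thus splits off `K_i`, and the complement is an
extension of a torsion-free module `W^b` by the torsion-free module `L^a`.
-/

section ExtComparison

theorem subsingleton_ext_iff_of_projectiveResolution {C : Type*} [Category C] [Abelian C]
    [HasExt C] {X : C} (P : ProjectiveResolution X) (Y : C) (n : ℕ) :
    Subsingleton (Abelian.Ext X Y n) ↔
      ∀ f : P.complex.X n ⟶ Y, P.complex.d (n + 1) n ≫ f = 0 →
        ∃ g : P.complex.X (n - 1) ⟶ Y, P.complex.d n (n - 1) ≫ g = f := by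
  cases n with
  | zero =>
    let π : P.complex.X 0 ⟶ X := P.π.f 0
    have : Epi π := inferInstanceAs (Epi (P.π.f 0))
    have d_π : P.complex.d 1 0 ≫ π = 0 := P.complex_d_comp_π_f_zero
    rw [Abelian.Ext.addEquiv₀.toEquiv.subsingleton_congr]
    constructor
    · intro h f hf
      obtain ⟨g, hg : π ≫ (g : X ⟶ Y) = f⟩ := P.exact₀.desc' f hf
      exact ⟨0, by rw [← hg, h.elim g 0, Limits.comp_zero, Limits.comp_zero]⟩
    · refine fun h ↦ subsingleton_of_forall_eq 0 fun f ↦ ?_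
      obtain ⟨g, hg⟩ := h (π ≫ f) (by rw [reassoc_of% d_π, Limits.zero_comp])
      rw [← cancel_epi π, ← hg, P.complex.shape _ _ (by simp), Limits.zero_comp, Limits.comp_zero]
  | succ n =>
    rw [subsingleton_iff_forall_eq 0]
    constructor
    · exact fun h f hf ↦ (P.extMk_eq_zero_iff f (n + 2) rfl hf n rfl).1 (h _)
    · intro h α
      obtain ⟨f, hf, rfl⟩ := P.extMk_surjective α (n + 2) rfl
      exact (P.extMk_eq_zero_iff f (n + 2) rfl hf n rfl).2 (h f hf)

variable {R} {X Y : Type u} [AddCommGroup X] [Module R X] [AddCommGroup Y] [Module R Y]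

theorem extVanish_iff_subsingleton_ext (n : ℕ) :
    ExtVanish R X Y n ↔ Subsingleton (Abelian.Ext (ModuleCat.of R X) (ModuleCat.of R Y) n) := by
  let P := ProjectiveResolution.of (ModuleCat.of R X)
  rw [subsingleton_ext_iff_of_projectiveResolution P, ExtVanish,
    ← ModuleCat.isZero_iff_subsingleton, (P.isoExt n (ModuleCat.of R Y)).isZero_iff,
    ← HomologicalComplex.exactAt_iff_isZero_homology,
    HomologicalComplex.exactAt_iff' _ (n - 1) n (n + 1) (by cases n <;> simp) (by simp),
    ShortComplex.moduleCat_exact_iff]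
  rfl

end ExtComparison

section Depth

open IsLocalRing RingTheory.Sequence

variable {R} [IsLocalRing R]

theorem natCast_le_depth_iff {M : ModuleCat.{u} R} {n : ℕ} :
    n ≤ depth R M ↔ ∀ i < n, ExtVanish R (R ⧸ maximalIdeal R) M i := by
  constructor
  · intro h i hi
    by_contra hExt
    exact (Nat.cast_le.1 (h.trans (sInf_le ⟨i, rfl, hExt⟩))).not_gt hi
  · rintro h
    refine le_sInf ?_
    rintro _ ⟨i, rfl, hExt⟩
    exact Nat.cast_le.2 (not_lt.1 fun hi ↦ hExt (h i hi))

variable [IsNoetherianRing R]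

theorem length_le_ringKrullDim_of_isRegular {M : Type*} [AddCommGroup M]
    [Module R M] [Module.Finite R M] {rs : List R} (reg : IsRegular M rs) :
    rs.length ≤ ringKrullDim R := by
  let Q := M ⧸ Ideal.ofList rs • (⊤ : Submodule R M)
  have : Nontrivial Q := Submodule.Quotient.nontrivial_iff.2 reg.top_ne_smul.symm
  have : Nonempty (Module.support R Q) := Module.nonempty_support_of_nontrivial.to_subtype
  calc (rs.length : WithBot ℕ∞) ≤ Module.supportDim R Q + rs.length :=
        le_add_of_nonneg_left Order.krullDim_nonneg
    _ = Module.supportDim R M := Module.supportDim_add_length_eq_supportDim_of_isRegular rs reg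
    _ ≤ ringKrullDim R := Module.supportDim_le_ringKrullDim R M

variable (M : ModuleCat.{u} R) [Module.Finite R M] [Nontrivial M]

theorem natCast_le_depth_iff_exists_isRegular {n : ℕ} :
    n ≤ depth R M ↔
      ∃ rs : List R, rs.length = n ∧ (∀ r ∈ rs, r ∈ maximalIdeal R) ∧ IsRegular M rs := by
  have smul_lt : maximalIdeal R • (⊤ : Submodule R M) < ⊤ :=
    lt_top_iff_ne_top.2 (Submodule.top_ne_ideal_smul_of_le_jacobson_annihilator
      (maximalIdeal_le_jacobson _)).symm
  have supp : Module.support R (R ⧸ maximalIdeal R) =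
      PrimeSpectrum.zeroLocus (maximalIdeal R) := by
    rw [Module.support_eq_zeroLocus, Ideal.annihilator_quotient]
  simp only [natCast_le_depth_iff, extVanish_iff_subsingleton_ext]
  constructor
  · exact ModuleCat.exists_isRegular_of_exists_subsingleton_ext _ n M smul_lt _ supp
  · rintro ⟨rs, rfl, mem, reg⟩
    exact ModuleCat.subsingleton_ext_of_exists_isRegular _ _ supp.le M smul_lt rs mem reg

theorem depth_le_ringKrullDim : (depth R M : WithBot ℕ∞) ≤ ringKrullDim R := by
  obtain ⟨d, hd⟩ := WithBot.ne_bot_iff_exists.1 (ringKrullDim_ne_bot (R := R))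
  rw [← hd, WithBot.coe_le_coe]
  refine ENat.forall_natCast_le_iff_le.1 fun n hn ↦ WithBot.coe_le_coe.1 ?_
  obtain ⟨rs, rfl, -, reg⟩ := (natCast_le_depth_iff_exists_isRegular M).1 hn
  exact hd ▸ length_le_ringKrullDim_of_isRegular reg

theorem isMCM_of_isRegular {rs : List R} (mem : ∀ r ∈ rs, r ∈ maximalIdeal R)
    (reg : IsRegular M rs) (h : ringKrullDim R ≤ rs.length) : IsMCM R M :=
  le_antisymm (depth_le_ringKrullDim M) <| h.trans <| WithBot.coe_le_coe.2 <|
    (natCast_le_depth_iff_exists_isRegular M).2 ⟨rs, rfl, mem, reg⟩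

end Depth

section InjectiveDimension

open Abelian

section Abelian

variable {C : Type*} [Category C] [Abelian C] [HasExt C] {X Y Z : C} {n : ℕ}

theorem exists_comp_eq_of_subsingleton_ext_one {S : ShortComplex C} (hS : S.ShortExact)
    [Subsingleton (Ext S.X₃ Y 1)] (f : S.X₁ ⟶ Y) : ∃ g : S.X₂ ⟶ Y, S.f ≫ g = f := by
  obtain ⟨e, he⟩ :=
    Ext.contravariant_sequence_exact₁ hS Y (Ext.mk₀ f) (zero_add 1) (Subsingleton.elim _ _)
  obtain ⟨g, rfl⟩ := Ext.homEquiv₀.symm.surjective e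
  exact ⟨g, Ext.homEquiv₀.symm.injective (by simpa using he)⟩

theorem subsingleton_ext_of_shortExact {S : ShortComplex C} (hS : S.ShortExact)
    [Subsingleton (Ext S.X₁ Y n)] [Subsingleton (Ext S.X₃ Y n)] :
    Subsingleton (Ext S.X₂ Y n) := by
  refine subsingleton_of_forall_eq 0 fun e ↦ ?_
  obtain ⟨e', rfl⟩ := Ext.contravariant_sequence_exact₂ hS Y e (Subsingleton.elim _ _)
  rw [Subsingleton.elim e' 0, Ext.comp_zero]

theorem subsingleton_ext_of_mono (f : X ⟶ Z) [Mono f] [HasInjectiveDimensionLT Y (n + 1)]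
    [Subsingleton (Ext Z Y n)] : Subsingleton (Ext X Y n) := by
  refine subsingleton_of_forall_eq 0 fun e ↦ ?_
  obtain ⟨e', rfl⟩ := Ext.contravariant_sequence_exact₁ { exact := ShortComplex.exact_cokernel f }
    Y e (add_comm 1 n) (Ext.eq_zero_of_hasInjectiveDimensionLT _ (n + 1) le_rfl)
  rw [Subsingleton.elim e' 0, Ext.comp_zero]

theorem subsingleton_ext_X₃_of_injective {S : ShortComplex C} (hS : S.ShortExact)
    [Injective S.X₂] [Subsingleton (Ext X S.X₁ (n + 2))] : Subsingleton (Ext X S.X₃ (n + 1)) := by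
  refine subsingleton_of_forall_eq 0 fun e ↦ ?_
  obtain ⟨e', rfl⟩ := Ext.covariant_sequence_exact₃ X hS e rfl (Subsingleton.elim _ _)
  rw [Ext.eq_zero_of_injective e', Ext.zero_comp]

end Abelian

variable {R}

theorem InjdimLE.hasInjectiveDimensionLE {n : ℕ} {M : ModuleCat.{u} R} (h : InjdimLE R n M) :
    HasInjectiveDimensionLE M n := by
  induction n generalizing M with
  | zero =>
    have : Injective M := (Module.injective_iff_injective_object R M).1 h
    infer_instance
  | succ n ih =>
    obtain ⟨I, C, f, g, hI, ⟨inj, surj, exact⟩, hC⟩ := h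
    have : Injective I := (Module.injective_iff_injective_object R I).1 hI
    exact (ModuleCat.shortComplex_shortExact (.mk (ModuleCat.ofHom f) (ModuleCat.ofHom g)
      (ModuleCat.hom_ext exact.linearMap_comp_eq_zero)) exact inj surj).hasInjectiveDimensionLT_X₁
        (n + 1) (ih hC) inferInstance

theorem subsingleton_ext_zero_iff {X Y : ModuleCat.{u} R} :
    Subsingleton (Ext X Y 0) ↔ Subsingleton (X →ₗ[R] Y) :=
  (Ext.addEquiv₀.trans ModuleCat.homAddEquiv).toEquiv.subsingleton_congr

theorem baer_of_subsingleton_ext_one {M : ModuleCat.{u} R}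
    (h : ∀ I : Ideal R, Subsingleton (Ext (ModuleCat.of R (R ⧸ I)) M 1)) : Module.Baer R M := by
  intro I φ
  have exact := LinearMap.exact_subtype_mkQ I
  have := h I
  obtain ⟨ψ, hψ⟩ := exists_comp_eq_of_subsingleton_ext_one
    (ModuleCat.shortComplex_shortExact (ModuleCat.shortComplexOfCompEqZero I.subtype I.mkQ
      exact.linearMap_comp_eq_zero) exact I.injective_subtype I.mkQ_surjective)
    (ModuleCat.ofHom φ)
  exact ⟨ψ.hom, fun x hx ↦ LinearMap.congr_fun (ModuleCat.hom_ext_iff.1 hψ) ⟨x, hx⟩⟩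

theorem hasInjectiveDimensionLT_of_subsingleton_ext_quotient {n : ℕ} {M : ModuleCat.{u} R}
    (h : ∀ I : Ideal R, Subsingleton (Ext (ModuleCat.of R (R ⧸ I)) M n)) :
    HasInjectiveDimensionLT M n := by
  match n with
  | 0 =>
    have hHom : Subsingleton ((R ⧸ (⊥ : Ideal R)) →ₗ[R] M) := subsingleton_ext_zero_iff.1 (h ⊥)
    let e : ((R ⧸ (⊥ : Ideal R)) →ₗ[R] M) ≃ₗ[R] M :=
      ((Submodule.quotEquivOfEqBot ⊥ rfl).congrLeft M R).trans (LinearMap.ringLmapEquivSelf R R M)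
    have : Subsingleton M := e.symm.toEquiv.subsingleton
    exact (ModuleCat.isZero_of_subsingleton M).hasInjectiveDimensionLT_zero
  | 1 =>
    exact injective_iff_hasInjectiveDimensionLT_one.1
      ((Module.injective_iff_injective_object R M).1 (baer_of_subsingleton_ext_one h).injective)
  | n + 2 =>
    obtain ⟨I⟩ := EnoughInjectives.presentation M
    have hS : (ShortComplex.mk I.f (Limits.cokernel.π I.f)
      (Limits.cokernel.condition I.f)).ShortExact := { exact := ShortComplex.exact_cokernel I.f }
    rw [← hS.hasInjectiveDimensionLT_X₃_iff n I.injective]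
    exact hasInjectiveDimensionLT_of_subsingleton_ext_quotient fun J ↦
      have := h J
      subsingleton_ext_X₃_of_injective hS

end InjectiveDimension

section Bass

open Abelian IsLocalRing RingTheory.Sequence

variable {R} [IsNoetherianRing R] [IsLocalRing R]

theorem exists_injective_residueField_of_depth_le (N : ModuleCat.{u} R) [Module.Finite R N]
    [Nontrivial N] {rs : List R} (mem : ∀ r ∈ rs, r ∈ maximalIdeal R)
    (reg : IsWeaklyRegular N rs) (hdepth : depth R N ≤ rs.length) :
    ∃ f : (R ⧸ maximalIdeal R) →ₗ[R] N ⧸ Ideal.ofList rs • (⊤ : Submodule R N),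
      Function.Injective f := by
  by_contra! hinj
  have : IsSimpleModule R (R ⧸ maximalIdeal R) :=
    isSimpleModule_iff_isCoatom.2 (IsLocalRing.maximalIdeal.isMaximal R).out
  have hom_eq_zero : Subsingleton
      ((R ⧸ maximalIdeal R) →ₗ[R] N ⧸ Ideal.ofList rs • (⊤ : Submodule R N)) :=
    subsingleton_of_forall_eq 0 fun f ↦ f.injective_or_eq_zero.resolve_left (hinj f)
  obtain ⟨x, hx, hxreg⟩ := IsSMulRegular.subsingleton_linearMap_iff.1 hom_eq_zero
  rw [Ideal.annihilator_quotient] at hx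
  have mem_concat : ∀ r ∈ rs ++ [x], r ∈ maximalIdeal R := by
    simpa only [List.mem_append, List.mem_singleton, or_imp, forall_and, forall_eq] using ⟨mem, hx⟩
  have reg_concat : IsWeaklyRegular N (rs ++ [x]) :=
    (isWeaklyRegular_append_iff ..).2 ⟨reg, (isWeaklyRegular_singleton_iff ..).2 hxreg⟩
  have := (natCast_le_depth_iff_exists_isRegular N).2 ⟨_, rfl, mem_concat,
    .of_isWeaklyRegular_of_mem_maximalIdeal N mem_concat reg_concat⟩
  have : rs.length + 1 ≤ rs.length := by simpa using Nat.cast_le.1 (this.trans hdepth)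
  omega

variable {M : ModuleCat.{u} R} [Module.Finite R M] {n : ℕ}

theorem subsingleton_ext_of_isSMulRegular [HasInjectiveDimensionLT M (n + 1)]
    (N : ModuleCat.{u} R) [Module.Finite R N] {x : R} (mem : x ∈ maximalIdeal R)
    (reg : IsSMulRegular N x) : Subsingleton (Ext N M n) := by
  by_contra! ntr
  refine Submodule.top_ne_pointwise_smul_of_mem_jacobson_annihilator
    (maximalIdeal_le_jacobson (Module.annihilator R (Ext N M n)) mem) (top_le_iff.1 ?_).symm
  intro e _
  obtain ⟨e' : Ext N M n, rfl⟩ := Ext.contravariant_sequence_exact₁ reg.smulShortComplex_shortExact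
    M e (add_comm 1 n) (Ext.eq_zero_of_hasInjectiveDimensionLT _ (n + 1) le_rfl)
  have mk₀_comp : (Ext.mk₀ (x • 𝟙 N)).comp e' (zero_add n) = x • e' := by
    rw [Ext.mk₀_smul, Ext.smul_comp, Ext.mk₀_id_comp]
  exact mk₀_comp ▸ Submodule.smul_mem_pointwise_smul e' x ⊤ trivial

theorem subsingleton_ext_quotient_prime [HasInjectiveDimensionLT M (n + 1)] {p : Ideal R}
    [hp : p.IsPrime] (ne : p ≠ maximalIdeal R) :
    Subsingleton (Ext (ModuleCat.of R (R ⧸ p)) M n) := by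
  obtain ⟨x, mem, notMem⟩ := SetLike.exists_of_lt ((le_maximalIdeal hp.ne_top).lt_of_ne ne)
  exact subsingleton_ext_of_isSMulRegular _ mem <|
    (isSMulRegular_quotient_iff_mem_of_smul_mem p x).2 fun y hxy ↦
      (hp.mem_or_mem hxy).resolve_left notMem

theorem subsingleton_ext_of_residueField [HasInjectiveDimensionLT M (n + 1)]
    [hk : Subsingleton (Ext (ModuleCat.of R (R ⧸ maximalIdeal R)) M n)]
    (N : Type u) [AddCommGroup N] [Module R N] [hN : Module.Finite R N] :
    Subsingleton (Ext (ModuleCat.of R N) M n) := by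
  induction hN using IsNoetherianRing.induction_on_isQuotientEquivQuotientPrime R with
  | subsingleton N =>
    have := (ModuleCat.isZero_of_subsingleton (ModuleCat.of R N)).hasProjectiveDimensionLT_zero
    exact HasProjectiveDimensionLT.subsingleton _ 0 n n.zero_le M
  | quotient N p e =>
    have : Subsingleton (Ext (ModuleCat.of R (R ⧸ p.asIdeal)) M n) := by
      by_cases hp : p.asIdeal = maximalIdeal R
      · rwa [hp]
      · exact subsingleton_ext_quotient_prime hp
    exact subsingleton_ext_of_mono e.toModuleIso.hom
  | exact N₁ N₂ N₃ f g inj surj exact h₁ h₃ =>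
    exact subsingleton_ext_of_shortExact (ModuleCat.shortComplex_shortExact
      (ModuleCat.shortComplexOfCompEqZero f g exact.linearMap_comp_eq_zero) exact inj surj)

theorem hasInjectiveDimensionLT_of_residueField [HasInjectiveDimensionLT M (n + 1)]
    [Subsingleton (Ext (ModuleCat.of R (R ⧸ maximalIdeal R)) M n)] :
    HasInjectiveDimensionLT M n :=
  hasInjectiveDimensionLT_of_subsingleton_ext_quotient fun I ↦
    subsingleton_ext_of_residueField (R ⧸ I)

theorem hasInjectiveDimensionLT_of_mono_residueField {Q : ModuleCat.{u} R}
    (f : ModuleCat.of R (R ⧸ maximalIdeal R) ⟶ Q) [Mono f] [HasProjectiveDimensionLT Q n] {m : ℕ}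
    (hM : HasInjectiveDimensionLT M (n + m)) : HasInjectiveDimensionLT M n := by
  induction m with
  | zero => exact hM
  | succ m ih =>
    have : HasInjectiveDimensionLT M (n + m + 1) := hM
    have := HasProjectiveDimensionLT.subsingleton Q n (n + m) (n.le_add_right m) M
    have := subsingleton_ext_of_mono (Y := M) (n := n + m) f
    exact ih hasInjectiveDimensionLT_of_residueField

theorem hasInjectiveDimensionLE_of_depth_le {m : ℕ} [HasInjectiveDimensionLE M m]
    (hdepth : depth R (ModuleCat.of R R) ≤ n) : HasInjectiveDimensionLE M n := by
  obtain ⟨d, hd⟩ := ENat.ne_top_iff_exists.1 (ne_top_of_le_ne_top (ENat.natCast_ne_top n) hdepth)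
  obtain ⟨rs, rfl, mem, reg⟩ :=
    (natCast_le_depth_iff_exists_isRegular (ModuleCat.of R R)).1 hd.le
  obtain ⟨f, hf⟩ := exists_injective_residueField_of_depth_le _ mem reg.1 hd.ge
  have : Mono (ModuleCat.ofHom f) := (ModuleCat.mono_iff_injective _).2 hf
  have pd_le : projectiveDimension (ModuleCat.of R (ModuleCat.of R R ⧸ Ideal.ofList rs •
      (⊤ : Submodule R (ModuleCat.of R R)))) ≤ n := by
    rw [ModuleCat.projectiveDimension_quotient_eq_add_length_of_isWeaklyRegular _ rs reg.1 mem,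
      ModuleCat.projectiveDimension_eq_zero_of_projective, zero_add]
    exact_mod_cast hd.trans_le hdepth
  rw [projectiveDimension_le_iff] at pd_le
  exact hasInjectiveDimensionLT_of_mono_residueField (ModuleCat.ofHom f)
    (hasInjectiveDimensionLT_of_ge M (m + 1) (n + 1 + m) (by omega))

end Bass

section CohenMacaulay

open Abelian IsLocalRing RingTheory.Sequence

variable {R} [IsNoetherianRing R] [IsLocalRing R]

theorem krullDimLE_zero_of_injective (M : ModuleCat.{u} R) [Module.Finite R M] [Nontrivial M]
    [Injective M] : Ring.KrullDimLE 0 R := by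
  refine Ring.krullDimLE_zero_iff.2 fun p hp ↦ ?_
  by_contra hmax
  have hne : p ≠ maximalIdeal R := fun h ↦ hmax (h ▸ maximalIdeal.isMaximal R)
  have hom_p : Subsingleton ((R ⧸ p) →ₗ[R] M) :=
    subsingleton_ext_zero_iff.1 (subsingleton_ext_quotient_prime (n := 0) hne)
  have factor_surj := Submodule.factor_surjective (le_maximalIdeal hp.ne_top)
  have hom_k : Subsingleton ((R ⧸ maximalIdeal R) →ₗ[R] M) :=
    factor_surj.injective_linearMapComp_right.subsingleton
  have : Subsingleton (Ext (ModuleCat.of R (R ⧸ maximalIdeal R)) M 0) :=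
    subsingleton_ext_zero_iff.2 hom_k
  have : HasInjectiveDimensionLT M 0 := hasInjectiveDimensionLT_of_residueField
  exact not_subsingleton M (ModuleCat.isZero_iff_subsingleton.1
    (isZero_of_hasInjectiveDimensionLT_zero M))

theorem isMCM_self_of_hasInjectiveDimensionLE (hd : ringKrullDim R ≤ 1) (M : ModuleCat.{u} R)
    [Module.Finite R M] [Nontrivial M] {m : ℕ} [HasInjectiveDimensionLE M m] :
    IsMCM R (ModuleCat.of R R) := by
  refine le_antisymm (depth_le_ringKrullDim _) ?_
  rcases eq_or_ne (depth R (ModuleCat.of R R)) 0 with hdepth | hdepth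
  · have : HasInjectiveDimensionLE M 0 := hasInjectiveDimensionLE_of_depth_le (m := m) hdepth.le
    have : Injective M := injective_iff_hasInjectiveDimensionLT_one.2 this
    rw [hdepth]
    exact Ring.krullDimLE_iff.1 (krullDimLE_zero_of_injective M)
  · exact hd.trans (WithBot.coe_le_coe.2 (Order.one_le_iff_ne_zero.2 hdepth))

theorem IsMCM.of_isTorsionFree (hd : ringKrullDim R ≤ 1) (hR : IsMCM R (ModuleCat.of R R))
    (L : ModuleCat.{u} R) [Module.Finite R L] [Nontrivial L] [Module.IsTorsionFree R L] :
    IsMCM R L := by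
  have depth_le : depth R (ModuleCat.of R R) ≤ 1 := WithBot.coe_le_coe.1 (hR.le.trans hd)
  obtain ⟨d, hdepth⟩ := ENat.ne_top_iff_exists.1 (ne_top_of_le_ne_top ENat.one_ne_top depth_le)
  obtain ⟨rs, rfl, mem, reg⟩ :=
    (natCast_le_depth_iff_exists_isRegular (ModuleCat.of R R)).1 hdepth.le
  have reg_L : IsWeaklyRegular L rs := by
    match rs, Nat.cast_le.1 (hdepth.trans_le depth_le) with
    | [], _ => exact .nil R L
    | [x], _ =>
      have hx : IsSMulRegular R x := (isWeaklyRegular_singleton_iff ..).1 reg.1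
      exact (isWeaklyRegular_singleton_iff ..).2
        (isLeftRegular_iff_isRegular.1 (isLeftRegular_iff.2 hx)).isSMulRegular
  refine isMCM_of_isRegular L mem (.of_isWeaklyRegular_of_mem_maximalIdeal L mem reg_L) ?_
  rw [← hR, ← hdepth]
  rfl

end CohenMacaulay

section Splitting

variable {R} {P A B C : Type u} [AddCommGroup P] [Module R P] [AddCommGroup A] [Module R A]
  [AddCommGroup B] [Module R B] [AddCommGroup C] [Module R C]

theorem isTorsionFree_of_range_eq_ker [Module.IsTorsionFree R A] [Module.IsTorsionFree R C]
    {f : A →ₗ[R] B} {g : B →ₗ[R] C} (hf : Function.Injective f)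
    (h : LinearMap.range f = LinearMap.ker g) : Module.IsTorsionFree R B where
  isSMulRegular _ hr :=
    isSMulRegular_of_range_eq_ker hf h hr.isSMulRegular hr.isSMulRegular

theorem exists_pi_comp_eq_of_subsingleton_ext_one {f : A →ₗ[R] B} {g : B →ₗ[R] C}
    (hfg : IsShortExact R f g) {M : Type u} [AddCommGroup M] [Module R M]
    [Subsingleton (Abelian.Ext (ModuleCat.of R C) (ModuleCat.of R M) 1)] {ι : Type*}
    (φ : A →ₗ[R] ι → M) : ∃ ψ : B →ₗ[R] ι → M, ψ ∘ₗ f = φ := by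
  obtain ⟨inj, surj, exact⟩ := hfg
  have hS := ModuleCat.shortComplex_shortExact (ModuleCat.shortComplexOfCompEqZero f g
    exact.linearMap_comp_eq_zero) exact inj surj
  choose ψ hψ using fun i ↦ exists_comp_eq_of_subsingleton_ext_one hS
    (ModuleCat.ofHom (LinearMap.proj i ∘ₗ φ))
  refine ⟨LinearMap.pi fun i ↦ (ψ i).hom, LinearMap.ext fun x ↦ funext fun i ↦ ?_⟩
  exact LinearMap.congr_fun (ModuleCat.hom_ext_iff.1 (hψ i)) x

variable (R P A) in
/-- `A ≅ P ⊕ L` for some torsion-free module `L`. With `P` a power of `M`, this is the property that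
passes from each term of a reducing sequence of `M` to the next. -/
def HasTorsionFreeComplement : Prop :=
  ∃ L : ModuleCat.{u} R, Module.IsTorsionFree R L ∧ Nonempty (A ≃ₗ[R] P × L)

namespace HasTorsionFreeComplement

variable (R P) in
theorem refl : HasTorsionFreeComplement R P P :=
  ⟨ModuleCat.of R PUnit, inferInstance, ⟨LinearEquiv.prodUnique.symm⟩⟩

theorem congr_left {P' : Type u} [AddCommGroup P'] [Module R P'] (e : P ≃ₗ[R] P')
    (h : HasTorsionFreeComplement R P A) : HasTorsionFreeComplement R P' A := by
  obtain ⟨L, hL, ⟨eA⟩⟩ := h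
  exact ⟨L, hL, ⟨eA.trans (e.prodCongr (.refl R L))⟩⟩

theorem pi (h : HasTorsionFreeComplement R P A) (ι : Type) :
    HasTorsionFreeComplement R (ι → P) (ι → A) := by
  obtain ⟨L, hL, ⟨e⟩⟩ := h
  let piProd : (ι → P × L) ≃ₗ[R] (ι → P) × (ι → L) :=
    { Equiv.arrowProdEquivProdArrow ι (fun _ ↦ P) fun _ ↦ L with
      map_add' := fun _ _ ↦ rfl
      map_smul' := fun _ _ ↦ rfl }
  exact ⟨ModuleCat.of R (ι → L), inferInstance, ⟨(LinearEquiv.piCongrRight fun _ ↦ e).trans piProd⟩⟩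

theorem of_isShortExact (h : HasTorsionFreeComplement R P A) {f : A →ₗ[R] B} {g : B →ₗ[R] C}
    (hfg : IsShortExact R f g) [Module.IsTorsionFree R C]
    (hext : ∀ φ : A →ₗ[R] P, ∃ ψ : B →ₗ[R] P, ψ ∘ₗ f = φ) : HasTorsionFreeComplement R P B := by
  obtain ⟨L, hL, ⟨e⟩⟩ := h
  obtain ⟨inj, -, exact⟩ := hfg
  obtain ⟨q, hq⟩ := hext (LinearMap.fst R P L ∘ₗ e.toLinearMap)
  have q_f (x : A) : q (f x) = (e x).1 := LinearMap.congr_fun hq x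
  let i : L →ₗ[R] LinearMap.ker q :=
    (f ∘ₗ e.symm.toLinearMap ∘ₗ LinearMap.inr R P L).codRestrict _ fun l ↦ by simp [q_f]
  have i_inj : Function.Injective i := (LinearMap.injective_codRestrict_iff _).2 <|
    inj.comp (e.symm.injective.comp LinearMap.inr_injective)
  have range_i : LinearMap.range i = LinearMap.ker (g ∘ₗ (LinearMap.ker q).subtype) := by
    ext ⟨y, hy⟩
    constructor
    · rintro ⟨l, hl⟩
      rw [← hl]
      exact exact.apply_apply_eq_zero _
    · intro hgy
      obtain ⟨x, rfl⟩ := (exact y).1 hgy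
      have hx : (e x).1 = 0 := (q_f x).symm.trans hy
      exact ⟨(e x).2, Subtype.ext (congrArg f (e.symm_apply_eq.2 (Prod.ext hx.symm rfl)))⟩
  have split : q ∘ₗ f ∘ₗ e.symm.toLinearMap ∘ₗ LinearMap.inl R P L = LinearMap.id := by
    ext p
    simp [q_f]
  let splitting := (LinearMap.exact_subtype_ker_map q).splitSurjectiveEquiv
    (LinearMap.ker q).injective_subtype ⟨_, split⟩
  exact ⟨ModuleCat.of R (LinearMap.ker q), isTorsionFree_of_range_eq_ker i_inj range_i,
    ⟨splitting.1.trans (LinearEquiv.prodComm R _ P)⟩⟩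

theorem exists_isMCM [IsNoetherianRing R] [IsLocalRing R] (hd : ringKrullDim R ≤ 1)
    (hR : IsMCM R (ModuleCat.of R R)) [Module.Finite R A] (h : HasTorsionFreeComplement R P A) :
    ∃ L : ModuleCat.{u} R, Module.Finite R L ∧ (Subsingleton L ∨ IsMCM R L) ∧
      Nonempty (A ≃ₗ[R] P × L) := by
  obtain ⟨L, _, ⟨e⟩⟩ := h
  have : Module.Finite R L :=
    .of_surjective (LinearMap.snd R P L ∘ₗ e.toLinearMap) (Prod.snd_surjective.comp e.surjective)
  refine ⟨L, this, ?_, ⟨e⟩⟩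
  rcases subsingleton_or_nontrivial L with hL | _
  · exact .inl hL
  · exact .inr (.of_isTorsionFree hd hR L)

end HasTorsionFreeComplement

theorem exists_linearEquiv_prod_of_pow {c : ℕ} (hc : 1 ≤ c) (e : A ≃ₗ[R] (Fin c → P) × B) :
    ∃ N : ModuleCat.{u} R, Nonempty (A ≃ₗ[R] P × N) := by
  obtain ⟨c, rfl⟩ := Nat.exists_eq_add_of_le' hc
  let consEquiv : (Fin (c + 1) → P) ≃ₗ[R] P × (Fin c → P) :=
    (Fin.consLinearEquiv R fun _ ↦ P).symm
  exact ⟨ModuleCat.of R ((Fin c → P) × B), ⟨e.trans <|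
    (consEquiv.prodCongr (.refl R B)).trans (LinearEquiv.prodAssoc R P (Fin c → P) B)⟩⟩

end Splitting

section Syzygy

variable {R}

theorem IsSyzygy.exists_injective_free {n : ℕ} {W K : ModuleCat.{u} R}
    (hW : IsSyzygy R (n + 1) W K) :
    ∃ (F : ModuleCat.{u} R) (f : W →ₗ[R] F), Module.Free R F ∧ Function.Injective f := by
  induction n generalizing K with
  | zero =>
    obtain ⟨_, F, f, _, hF, -, ⟨inj, -, -⟩, ⟨e⟩⟩ := hW
    exact ⟨F, f ∘ₗ e.toLinearMap, hF, inj.comp e.injective⟩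
  | succ n ih =>
    obtain ⟨_, _, _, _, -, -, -, hW'⟩ := hW
    exact ih hW'

theorem subsingleton_ext_one_of_injective_projective {M : ModuleCat.{u} R}
    [HasInjectiveDimensionLE M 1] {W F : Type u} [AddCommGroup W] [Module R W] [AddCommGroup F]
    [Module R F] [Module.Projective R F] {f : W →ₗ[R] F} (hf : Function.Injective f) :
    Subsingleton (Abelian.Ext (ModuleCat.of R W) M 1) := by
  have : Mono (ModuleCat.ofHom f) := (ModuleCat.mono_iff_injective _).2 hf
  have := HasProjectiveDimensionLT.subsingleton (ModuleCat.of R F) 1 1 le_rfl M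
  exact subsingleton_ext_of_mono (ModuleCat.ofHom f)

end Syzygy

section ReducingStep

variable {R} {M : Type u} [AddCommGroup M] [Module R M]

theorem ReducingStep.hasTorsionFreeComplement [HasInjectiveDimensionLE (ModuleCat.of R M) 1]
    {K K' : ModuleCat.{u} R} {a b n c : ℕ} (hn : 1 ≤ n) (h : ReducingStep R K K' a b n)
    (hK : HasTorsionFreeComplement R (Fin c → M) K) :
    HasTorsionFreeComplement R (Fin (a * c) → M) K' := by
  obtain ⟨n, rfl⟩ := Nat.exists_eq_add_of_le' hn
  obtain ⟨W, f, g, hW, hfg⟩ := h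
  obtain ⟨F, i, hF, hi⟩ := hW.exists_injective_free
  have i_pow_inj : Function.Injective (i.compLeft (Fin b)) := hi.comp_left
  have := subsingleton_ext_one_of_injective_projective (M := ModuleCat.of R M) i_pow_inj
  have : Module.IsTorsionFree R W := hi.moduleIsTorsionFree i i.map_smul
  let uncurry : (Fin a → Fin c → M) ≃ₗ[R] (Fin (a * c) → M) :=
    (LinearEquiv.curry R M (Fin a) (Fin c)).symm.trans
      (LinearEquiv.funCongrLeft R M finProdFinEquiv.symm)
  exact ((hK.pi (Fin a)).congr_left uncurry).of_isShortExact hfg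
    (exists_pi_comp_eq_of_subsingleton_ext_one hfg)

theorem hasTorsionFreeComplement_of_reducingSteps [HasInjectiveDimensionLE (ModuleCat.of R M) 1]
    {r : ℕ} {K : Fin (r + 1) → ModuleCat.{u} R} (hK0 : K 0 = ModuleCat.of R M)
    {a b n : Fin r → ℕ} (han : ∀ i, 1 ≤ a i ∧ 1 ≤ n i)
    (hseq : ∀ i : Fin r, ReducingStep R (K i.castSucc) (K i.succ) (a i) (b i) (n i))
    (i : Fin (r + 1)) : ∃ c, 1 ≤ c ∧ HasTorsionFreeComplement R (Fin c → M) (K i) := by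
  induction i using Fin.induction with
  | zero =>
    exact ⟨1, le_rfl, hK0 ▸ (HasTorsionFreeComplement.refl R M).congr_left
      (LinearEquiv.funUnique (Fin 1) R M).symm⟩
  | succ i ih =>
    obtain ⟨c, hc, hK⟩ := ih
    exact ⟨a i * c, Nat.mul_pos (han i).1 hc, (hseq i).hasTorsionFreeComplement (han i).2 hK⟩

end ReducingStep

theorem stmt14_general (R : Type u) [CommRing R] [IsNoetherianRing R] [IsLocalRing R]
    (hd : ringKrullDim R ≤ 1)
    (M : Type u) [AddCommGroup M] [Module R M] [Module.Finite R M] [Nontrivial M]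
    (hinj : ∃ n : ℕ, InjdimLE R n (ModuleCat.of R M))
    (r : ℕ) (K : Fin (r + 1) → ModuleCat.{u} R) (hK0 : K 0 = ModuleCat.of R M)
    (hfin : ∀ i, Module.Finite R (K i))
    (a b n : Fin r → ℕ) (han : ∀ i, 1 ≤ a i ∧ 1 ≤ n i)
    (hseq : ∀ i : Fin r, ReducingStep R (K i.castSucc) (K i.succ) (a i) (b i) (n i)) :
    (∀ i : Fin (r + 1), ∃ (c : ℕ) (L : ModuleCat.{u} R), 1 ≤ c ∧ Module.Finite R L ∧
        (Subsingleton L ∨ IsMCM R L) ∧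
        Nonempty ((K i : Type u) ≃ₗ[R] ((Fin c → M) × L))) ∧
      ∃ N : ModuleCat.{u} R, Nonempty ((K (Fin.last r) : Type u) ≃ₗ[R] (M × N)) := by
  obtain ⟨m, hm⟩ := hinj
  have := hm.hasInjectiveDimensionLE
  have hR : IsMCM R (ModuleCat.of R R) :=
    isMCM_self_of_hasInjectiveDimensionLE hd (ModuleCat.of R M) (m := m)
  have : HasInjectiveDimensionLE (ModuleCat.of R M) 1 :=
    hasInjectiveDimensionLE_of_depth_le (m := m) (WithBot.coe_le_coe.1 (hR.le.trans hd))
  have decomposition (i : Fin (r + 1)) : ∃ (c : ℕ) (L : ModuleCat.{u} R), 1 ≤ c ∧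
      Module.Finite R L ∧ (Subsingleton L ∨ IsMCM R L) ∧
        Nonempty (K i ≃ₗ[R] (Fin c → M) × L) := by
    obtain ⟨c, hc, hK⟩ := hasTorsionFreeComplement_of_reducingSteps hK0 han hseq i
    obtain ⟨L, hL⟩ := hK.exists_isMCM hd hR
    exact ⟨c, L, hc, hL⟩
  obtain ⟨c, L, hc, -, -, ⟨e⟩⟩ := decomposition (Fin.last r)
  exact ⟨decomposition, exists_linearEquiv_prod_of_pow hc e⟩

theorem stmt14 (R : Type u) [CommRing R] [IsNoetherianRing R] [IsLocalRing R]
    (hd : ringKrullDim R = 1)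
    (M : Type u) [AddCommGroup M] [Module R M] [Module.Finite R M] [Nontrivial M]
    (hdepth : depth R (ModuleCat.of R M) = 0)
    (hinj : ∃ n : ℕ, InjdimLE R n (ModuleCat.of R M))
    (r : ℕ) (K : Fin (r + 1) → ModuleCat.{u} R) (hK0 : K 0 = ModuleCat.of R M)
    (hfin : ∀ i, Module.Finite R (K i))
    (a b n : Fin r → ℕ) (habn : ∀ i, 1 ≤ a i ∧ 1 ≤ b i ∧ 1 ≤ n i)
    (hseq : ∀ i : Fin r, ReducingStep R (K i.castSucc) (K i.succ) (a i) (b i) (n i)) :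
    (∀ i : Fin (r + 1), ∃ (c : ℕ) (L : ModuleCat.{u} R), 1 ≤ c ∧ Module.Finite R L ∧
        (Subsingleton L ∨ IsMCM R L) ∧
        Nonempty ((K i : Type u) ≃ₗ[R] ((Fin c → M) × L))) ∧
      ∃ N : ModuleCat.{u} R, Nonempty ((K (Fin.last r) : Type u) ≃ₗ[R] (M × N)) :=
  stmt14_general R hd.le M hinj r K hK0 hfin a b n (fun i ↦ ⟨(habn i).1, (habn i).2.2⟩) hseq
end
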